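/- Let m ≥ 1 be a natural number with r₊ ≤ 2^m − 1, let α ≥ 1 be a real scaling weight, and suppose K items V₁,…,V_K are sampled independently and uniformly from I. Then, with probability at least 1 − ⌈2^m/α⌉·(1 − r₊/|I|)^{⌊K/⌈2^m/α⌉⌋} over the sample, the scaled cross-entropy loss bounds the negative log-MRR: log(r₊) ≤ ℓ_SCE(α), where ℓ_SCE(α) := −s(v₊) + log( exp(s(v₊)) + α·Σ_{i=1}^K exp(s(V_i)) ). -/

import Mathlib

/-!
Write `N = ⌈2^m/α⌉`, `q = ⌊K/N⌋`, and call an index `i` a hit when `s (V i) ≥ s v₊`; each index is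
a hit with probability `r₊/|I|`. The indices `0, …, K-1` split into `N` residue classes modulo `N`,
each containing at least `q` indices, so a given class has no hit with probability at most
`(1 - r₊/|I|)^q` (`measure_pi_noHit_le`). By the union bound, outside an event of probability at
most `N (1 - r₊/|I|)^q` every class contains a hit. Then there are at least `N` hits, so
`α ∑ exp (s (V i)) ≥ α N exp (s v₊) ≥ 2^m exp (s v₊) ≥ r₊ exp (s v₊)`, and taking logarithms gives
the bound (`log_le_sce_of_forall_hit`).
-/

open MeasureTheory

theorem div_le_card_filter_mod (K N j : ℕ) (hj : j < N) :
    K / N ≤ (Finset.univ.filter (fun i : Fin K => i.val % N = j)).card := by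
  have hlt : ∀ t : Fin (K / N), j + N * t.val < K := fun t => by
    have h1 : N * (t.val + 1) ≤ N * (K / N) := Nat.mul_le_mul_left _ t.isLt
    have h2 : N * (K / N) ≤ K := Nat.mul_div_le K N
    rw [Nat.mul_add] at h1
    omega
  have hinj : Function.Injective (fun t : Fin (K / N) => (⟨j + N * t.val, hlt t⟩ : Fin K)) := by
    intro a b hab
    simp only [Fin.mk.injEq, Nat.add_left_cancel_iff] at hab
    exact Fin.ext (Nat.eq_of_mul_eq_mul_left (by omega) hab)
  calc K / N = (Finset.univ.image
        (fun t : Fin (K / N) => (⟨j + N * t.val, hlt t⟩ : Fin K))).card := by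
        rw [Finset.card_image_of_injective _ hinj, Finset.card_univ, Fintype.card_fin]
    _ ≤ _ := by
        apply Finset.card_le_card
        intro i hi
        obtain ⟨t, -, rfl⟩ := Finset.mem_image.1 hi
        simp [Nat.add_mul_mod_self_left, Nat.mod_eq_of_lt hj]

/-- A residue class modulo `N` has at least `K / N` members, whose samples land in `B`
independently. -/
theorem measure_pi_noHit_le {I : Type*} [MeasurableSpace I] (μ : Measure I)
    [IsProbabilityMeasure μ] (B : Set I) (K N j : ℕ) (hj : j < N) :
    Measure.pi (fun _ : Fin K => μ) {V | ∀ i : Fin K, i.val % N = j → V i ∈ B} ≤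
      μ B ^ (K / N) := by
  have hset : {V : Fin K → I | ∀ i : Fin K, i.val % N = j → V i ∈ B} =
      Set.univ.pi (fun i : Fin K => if i.val % N = j then B else Set.univ) := by
    ext V
    simp only [Set.mem_ofPred_eq, Set.mem_univ_pi]
    refine forall_congr' fun i => ?_
    split_ifs with h <;> simp [h]
  rw [hset, Measure.pi_pi]
  have hf : ∀ i : Fin K, μ (if i.val % N = j then B else Set.univ) =
      if i.val % N = j then μ B else 1 := by
    intro i
    split_ifs <;> simp
  simp only [hf]
  rw [← Finset.prod_filter, Finset.prod_const]
  exact pow_le_pow_right_of_le_one' prob_le_one (div_le_card_filter_mod K N j hj)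

/-- If every residue class modulo `N` contains an index `i` with `s (V i) ≥ s₀`, these `N` distinct
indices already make the loss at least `log r` for every `r ≤ α N`. -/
theorem log_le_sce_of_forall_hit {I : Type*} (s : I → ℝ) (s₀ : ℝ) (K N r : ℕ) (α : ℝ)
    (hα : 0 ≤ α) (hr : 0 < r) (hrN : (r : ℝ) ≤ α * N) (V : Fin K → I)
    (hV : ∀ j < N, ∃ i : Fin K, i.val % N = j ∧ s₀ ≤ s (V i)) :
    Real.log r ≤ -s₀ + Real.log (Real.exp s₀ + α * ∑ i : Fin K, Real.exp (s (V i))) := by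
  choose f hf hs using fun j : Fin N => hV j.val j.isLt
  have hinj : Function.Injective f := fun a b hab => by
    apply Fin.ext
    rw [← hf a, ← hf b, hab]
  have hsum : (N : ℝ) * Real.exp s₀ ≤ ∑ i : Fin K, Real.exp (s (V i)) := by
    calc (N : ℝ) * Real.exp s₀ = ∑ _j : Fin N, Real.exp s₀ := by simp
      _ ≤ ∑ j : Fin N, Real.exp (s (V (f j))) :=
          Finset.sum_le_sum fun j _ => Real.exp_le_exp.2 (hs j)
      _ = ∑ i ∈ Finset.univ.map ⟨f, hinj⟩, Real.exp (s (V i)) := by simp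
      _ ≤ _ := Finset.sum_le_sum_of_subset_of_nonneg (Finset.subset_univ _)
          fun i _ _ => (Real.exp_pos _).le
  have hr' : (0 : ℝ) < r := by exact_mod_cast hr
  have hexp := Real.exp_pos s₀
  have hmain : (r : ℝ) * Real.exp s₀ ≤
      Real.exp s₀ + α * ∑ i : Fin K, Real.exp (s (V i)) := by
    have h1 := mul_le_mul_of_nonneg_left hsum hα
    have h2 := mul_le_mul_of_nonneg_right hrN hexp.le
    nlinarith
  have hlog := Real.log_le_log (by positivity) hmain
  rw [Real.log_mul hr'.ne' hexp.ne', Real.log_exp] at hlog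
  linarith

/-- The no-hit probability of a single sample. -/
theorem uniform_compl_eq {I : Type*} [Fintype I] [Nonempty I] [MeasurableSpace I]
    [MeasurableSingletonClass I] (A : Set I) :
    (PMF.uniformOfFintype I).toMeasure Aᶜ =
      ENNReal.ofReal (1 - (A.ncard : ℝ) / (Fintype.card I : ℝ)) := by
  classical
  have hA : MeasurableSet A := A.toFinite.measurableSet
  have hn : (0 : ℝ) < Fintype.card I := by exact_mod_cast Fintype.card_pos
  rw [prob_compl_eq_one_sub hA, PMF.toMeasure_uniformOfFintype_apply A hA,
    ENNReal.ofReal_sub _ (by positivity), ENNReal.ofReal_one, ENNReal.ofReal_div_of_pos hn,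
    ENNReal.ofReal_natCast, ENNReal.ofReal_natCast, Set.ncard_eq_toFinset_card',
    Set.toFinset_card]

/-- Let `m ≥ 1` with `r₊ ≤ 2^m - 1`, let `α ≥ 1`, and let `K` items be
sampled independently and uniformly from `I`. Then with probability at least
`1 - ⌈2^m/α⌉ * (1 - r₊/|I|)^⌊K/⌈2^m/α⌉⌋` over the sample,
`log r₊ ≤ ℓ_SCE(α) = -s v₊ + log (exp (s v₊) + α * ∑ i, exp (s (V i)))`. -/
theorem SCE_bounds_neg_log_MRR_whp
    {I : Type*} [Fintype I] [Nonempty I]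
    [MeasurableSpace I] [MeasurableSingletonClass I]
    (s : I → ℝ) (vplus : I)
    (rplus : ℕ) (hr : rplus = ({u : I | s u ≥ s vplus} : Set I).ncard)
    (m : ℕ) (hm : 1 ≤ m) (hrm : rplus ≤ 2 ^ m - 1)
    (α : ℝ) (hα : 1 ≤ α)
    (K : ℕ) :
    ENNReal.ofReal
        (1 - (⌈((2 ^ m : ℕ) : ℝ) / α⌉₊ : ℝ) *
          (1 - (rplus : ℝ) / (Fintype.card I : ℝ)) ^ (K / ⌈((2 ^ m : ℕ) : ℝ) / α⌉₊)) ≤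
      MeasureTheory.Measure.pi
        (fun _ : Fin K => (PMF.uniformOfFintype I).toMeasure)
        {V : Fin K → I |
          Real.log (rplus : ℝ) ≤
            -s vplus +
              Real.log (Real.exp (s vplus) + α * ∑ i : Fin K, Real.exp (s (V i)))} := by
  set N := ⌈((2 ^ m : ℕ) : ℝ) / α⌉₊ with hN
  set A : Set I := {u : I | s u ≥ s vplus} with hA
  set μ := (PMF.uniformOfFintype I).toMeasure with hμ
  set G : Set (Fin K → I) := {V : Fin K → I | Real.log (rplus : ℝ) ≤
    -s vplus + Real.log (Real.exp (s vplus) + α * ∑ i : Fin K, Real.exp (s (V i)))} with hG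
  have hα0 : 0 < α := by linarith
  have hrpos : 0 < rplus := by
    rw [hr]
    exact (Set.ncard_pos A.toFinite).2 ⟨vplus, le_refl (s vplus)⟩
  have hrN : (rplus : ℝ) ≤ α * N := by
    have h1 : ((2 ^ m : ℕ) : ℝ) / α ≤ N := Nat.le_ceil _
    rw [div_le_iff₀ hα0] at h1
    have h2 : (rplus : ℝ) ≤ ((2 ^ m : ℕ) : ℝ) := by
      exact_mod_cast hrm.trans (Nat.sub_le _ _)
    linarith
  have hc : 0 ≤ 1 - (rplus : ℝ) / (Fintype.card I : ℝ) := by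
    rw [sub_nonneg]
    apply div_le_one_of_le₀ _ (Nat.cast_nonneg _)
    rw [hr, ← Nat.card_eq_fintype_card]
    exact_mod_cast Set.ncard_le_card A
  have hsub : Gᶜ ⊆ ⋃ j ∈ Finset.range N,
      {V : Fin K → I | ∀ i : Fin K, i.val % N = j → V i ∈ Aᶜ} := by
    intro V hV
    by_contra hno
    simp only [Set.mem_iUnion, Finset.mem_range, Set.mem_ofPred_eq, not_exists, not_forall,
      Set.mem_compl_iff, not_not] at hno
    refine hV (log_le_sce_of_forall_hit s (s vplus) K N rplus α hα0.le hrpos hrN V ?_)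
    intro j hj
    obtain ⟨i, hi, hiA⟩ := hno j hj
    exact ⟨i, hi, hiA⟩
  have hbad : Measure.pi (fun _ : Fin K => μ) Gᶜ ≤
      ENNReal.ofReal ((N : ℝ) * (1 - (rplus : ℝ) / (Fintype.card I : ℝ)) ^ (K / N)) := by
    calc Measure.pi (fun _ : Fin K => μ) Gᶜ
        ≤ ∑ j ∈ Finset.range N, Measure.pi (fun _ : Fin K => μ)
            {V : Fin K → I | ∀ i : Fin K, i.val % N = j → V i ∈ Aᶜ} :=
          (measure_mono hsub).trans (measure_biUnion_finset_le _ _)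
      _ ≤ ∑ _j ∈ Finset.range N, μ Aᶜ ^ (K / N) :=
          Finset.sum_le_sum fun j hj =>
            measure_pi_noHit_le μ Aᶜ K N j (Finset.mem_range.1 hj)
      _ = _ := by
          rw [Finset.sum_const, Finset.card_range, nsmul_eq_mul, hμ, uniform_compl_eq, ← hr,
            ENNReal.ofReal_mul (Nat.cast_nonneg _), ENNReal.ofReal_natCast,
            ENNReal.ofReal_pow hc]
  rw [ENNReal.ofReal_sub _ (by positivity), ENNReal.ofReal_one, tsub_le_iff_right]
  calc (1 : ENNReal) = Measure.pi (fun _ : Fin K => μ) (G ∪ Gᶜ) := by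
        rw [Set.union_compl_self, measure_univ]
    _ ≤ _ := (measure_union_le _ _).trans (by gcongr)
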